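/- Let K⁺, K⁻ : ℕ → ℕ → ℝ be nonnegative symmetric kernels, K̂ a nonnegative symmetric majorant kernel with K̂ ≥ max{K⁺, K⁻} pointwise, and μ⊕, μ⊙, μ⊖ : ℕ → ℝ nonnegative finitely supported functions. Set K_S⁰ := min{K⁺, K⁻}, Δ_S⁺ := max{K⁺ − K⁻, 0}, Δ_S⁻ := max{K⁻ − K⁺, 0}; T₊(y) := Σ_x K̂(x,y)μ⊕(x), T₋(y) := Σ_z K̂(y,z)μ⊖(z); r⁻(x,y,z) := K̂(x,y)K⁻(y,z)/T₊(y), r⁺(x,y,z) := K̂(y,z)K⁺(x,y)/T₋(y); K_D⁰ := min{r⁻, r⁺}, Δ_D⁺ := max{r⁺ − r⁻, 0}, Δ_D⁻ := max{r⁻ − r⁺, 0}. Assume T₊(y) > 0 and T₋(y) > 0 for every y in the support of μ⊙. Then for every h : ℕ → ℝ the following identity holds: [ (1/2)Σ_{x,y≥1}(h(x+y) − h(x) − h(y))K_S⁰(x,y)μ⊙(x)μ⊙(y) − Σ_{x,y≥1} h(x)(Δ_S⁺ + Δ_S⁻)(x,y)μ⊙(x)μ⊙(y) − Σ_{x,y,z≥1}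 h(y)(K_D⁰ + Δ_D⁺ + Δ_D⁻)(x,y,z)μ⊕(x)μ⊙(y)μ⊖(z) ] + [ (1/2)Σ_{x,y≥1} h(x+y)Δ_S⁻(x,y)μ⊙(x)μ⊙(y) + Σ_{x,y≥1} h(x)Δ_S⁺(x,y)μ⊙(x)μ⊙(y) + Σ_{x,y,z≥1}(h(y+z) − h(z))(K_D⁰ + Δ_D⁻)(x,y,z)μ⊕(x)μ⊙(y)μ⊖(z) + Σ_{x,y,z≥1} h(y)Δ_D⁺(x,y,z)μ⊕(x)μ⊙(y)μ⊖(z) + (1/2)Σ_{y,z≥1}(h(y+z) − h(y) − h(z))K⁻(y,z)μ⊖(y)μ⊖(z) ] = (1/2)Σ_{x,y≥1}(h(x+y) − h(x) − h(y))K⁻(x,y)(μ⊙ + μ⊖)(x)(μ⊙ + μ⊖)(y). Consequently, if (μ_t^⊕, μ_t^⊙, μ_t^⊖) solves the coupled limit system of differential equations for all test functions, then μ_t^− := μ_t^⊙ + μ_t^⊖ satisfies Smoluchowski's coagulation equation with kernel K⁻. -/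

import Mathlib

/-! Write `Q(μ, ν) = ∑ (h (x + y) - h x - h y) K⁻(x, y) μ(x) ν(y)`, so that the right-hand side of
Smoluchowski's equation at `μ` is `Q(μ, μ) / 2`. Since `K_S⁰ + Δ_S⁻ = K⁻`, the terms quadratic in
`μ⊙` add up to `Q(μ⊙, μ⊙) / 2`. Since `K_D⁰ + Δ_D⁻ = r⁻`, the trilinear terms involve `r⁻` only, and
`∑ₓ r⁻(x, y, z) μ⊕(x) = K⁻(y, z)` sums out the `⊕` particle, leaving `Q(μ⊙, μ⊖)`. In both groups the
`Δ⁺` terms cancel. Expanding `Q(μ⊙ + μ⊖, μ⊙ + μ⊖)` by bilinearity and symmetry concludes. -/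

section Finsum

open Function

variable {E R : Type*} [CommSemiring R] {S : Set E} {A : Finset E} {μ ν ξ : E → R}

theorem finsum_mem_mul_eq_sum (hA : ↑A ⊆ S) (hμ : S ∩ support μ ⊆ A) (f : E → R) :
    ∑ᶠ x ∈ S, f x * μ x = ∑ x ∈ A, f x * μ x :=
  finsum_mem_eq_sum_of_subset _
    (subset_trans (Set.inter_subset_inter_right S (support_mul_subset_right f μ)) hμ) hA

theorem finsum_mem₂_mul_eq_sum (hA : ↑A ⊆ S) (hμ : S ∩ support μ ⊆ A)
    (hν : S ∩ support ν ⊆ A) (F : E → E → R) :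
    ∑ᶠ x ∈ S, ∑ᶠ y ∈ S, F x y * μ x * ν y = ∑ x ∈ A, ∑ y ∈ A, F x y * μ x * ν y := by
  simp_rw [finsum_mem_mul_eq_sum hA hν, mul_right_comm _ (μ _), ← Finset.sum_mul]
  exact finsum_mem_mul_eq_sum hA hμ _

theorem finsum_mem₃_mul_eq_sum (hA : ↑A ⊆ S) (hμ : S ∩ support μ ⊆ A)
    (hν : S ∩ support ν ⊆ A) (hξ : S ∩ support ξ ⊆ A) (F : E → E → E → R) :
    ∑ᶠ x ∈ S, ∑ᶠ y ∈ S, ∑ᶠ z ∈ S, F x y z * μ x * ν y * ξ z =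
      ∑ x ∈ A, ∑ y ∈ A, ∑ z ∈ A, F x y z * μ x * ν y * ξ z := by
  have pull_out (x y z : E) : F x y z * μ x * ν y * ξ z = F x y z * ξ z * μ x * ν y := by ring
  simp_rw [finsum_mem_mul_eq_sum hA hξ, pull_out, ← Finset.sum_mul]
  exact finsum_mem₂_mul_eq_sum hA hμ hν _

end Finsum

theorem finsum_mem_mul_div_finsum_mem_mul {E R : Type*} [Field R] {S : Set E} {a μ : E → R}
    (hT : ∑ᶠ x ∈ S, a x * μ x ≠ 0) (k : R) :
    ∑ᶠ x ∈ S, a x * k / (∑ᶠ w ∈ S, a w * μ w) * μ x = k := by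
  set T := ∑ᶠ x ∈ S, a x * μ x
  have pull_out (x : E) : a x * k / T * μ x = a x * μ x * (k / T) := by ring
  simp_rw [pull_out, ← finsum_mem_mul]
  exact mul_div_cancel₀ k hT

theorem min_add_max_sub_zero {R : Type*} [AddCommGroup R] [LinearOrder R] [IsOrderedAddMonoid R]
    (a b : R) : min a b + max (a - b) 0 = a := by
  rw [← sub_self b, max_sub_sub_right, add_sub, min_add_max, add_sub_cancel_right]

section Coagulation

variable {E R : Type*} {A : Finset E}

/-- The bilinear form polarizing Smoluchowski's coagulation equation with kernel `K`, tested
against `h` and with particle sizes restricted to `A`: the right-hand side of the equation at `μ` is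
`1 / 2 * coagulationForm A h K μ μ`. -/
def coagulationForm [Add E] [CommRing R] (A : Finset E) (h : E → R) (K : E → E → R)
    (μ ν : E → R) : R :=
  ∑ x ∈ A, ∑ y ∈ A, (h (x + y) - h x - h y) * K x y * μ x * ν y

theorem coagulationForm_comm [AddCommMagma E] [CommRing R] {h : E → R} {K : E → E → R}
    (hK : ∀ x y, K x y = K y x) (μ ν : E → R) :
    coagulationForm A h K μ ν = coagulationForm A h K ν μ := by
  unfold coagulationForm
  rw [Finset.sum_comm]
  refine Finset.sum_congr rfl fun x _ => Finset.sum_congr rfl fun y _ => ?_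
  rw [add_comm y x, hK y x]
  ring

theorem half_coagulationForm_add_self [AddCommMagma E] [Field R] [NeZero (2 : R)] {h : E → R}
    {K : E → E → R} (hK : ∀ x y, K x y = K y x) (μ ν : E → R) :
    1 / 2 * coagulationForm A h K (fun x => μ x + ν x) (fun x => μ x + ν x) =
      1 / 2 * coagulationForm A h K μ μ + coagulationForm A h K μ ν +
        1 / 2 * coagulationForm A h K ν ν := by
  have expand : coagulationForm A h K (fun x => μ x + ν x) (fun x => μ x + ν x) =
      coagulationForm A h K μ μ + coagulationForm A h K μ ν + coagulationForm A h K ν μ +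
        coagulationForm A h K ν ν := by
    simp only [coagulationForm, ← Finset.sum_add_distrib]
    exact Finset.sum_congr rfl fun x _ => Finset.sum_congr rfl fun y _ => by ring
  rw [expand, coagulationForm_comm hK ν μ]
  field_simp
  ring

theorem sum_sum_add_mul_of_symm [CommSemiring R] {D : E → E → R} (hD : ∀ x y, D x y = D y x)
    (h μ : E → R) :
    ∑ x ∈ A, ∑ y ∈ A, (h x + h y) * D x y * μ x * μ y =
      2 * ∑ x ∈ A, ∑ y ∈ A, h x * D x y * μ x * μ y := by
  have swap : ∑ x ∈ A, ∑ y ∈ A, h y * D x y * μ x * μ y =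
      ∑ x ∈ A, ∑ y ∈ A, h x * D x y * μ x * μ y := by
    rw [Finset.sum_comm]
    refine Finset.sum_congr rfl fun x _ => Finset.sum_congr rfl fun y _ => ?_
    rw [hD y x, mul_right_comm]
  simp only [add_mul, Finset.sum_add_distrib, swap, two_mul]

/-- Here `Δm` is the rate at which only the minus system coagulates a pair of shared particles, and
`Δp` the rate at which only the plus system does. -/
theorem sum_shared_coagulation [Add E] [Field R] [NeZero (2 : R)] {K K₀ Δm : E → E → R}
    (hK : ∀ x y, K₀ x y + Δm x y = K x y) (hΔm : ∀ x y, Δm x y = Δm y x) (Δp : E → E → R)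
    (h μ : E → R) :
    1 / 2 * ∑ x ∈ A, ∑ y ∈ A, (h (x + y) - h x - h y) * K₀ x y * μ x * μ y
        - ∑ x ∈ A, ∑ y ∈ A, h x * (Δp x y + Δm x y) * μ x * μ y
        + 1 / 2 * ∑ x ∈ A, ∑ y ∈ A, h (x + y) * Δm x y * μ x * μ y
        + ∑ x ∈ A, ∑ y ∈ A, h x * Δp x y * μ x * μ y
      = 1 / 2 * coagulationForm A h K μ μ := by
  have split_kernel : coagulationForm A h K μ μ =
      ∑ x ∈ A, ∑ y ∈ A, (h (x + y) - h x - h y) * K₀ x y * μ x * μ y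
        + ∑ x ∈ A, ∑ y ∈ A, h (x + y) * Δm x y * μ x * μ y
        - ∑ x ∈ A, ∑ y ∈ A, (h x + h y) * Δm x y * μ x * μ y := by
    simp only [coagulationForm, ← hK, ← Finset.sum_add_distrib, ← Finset.sum_sub_distrib]
    exact Finset.sum_congr rfl fun x _ => Finset.sum_congr rfl fun y _ => by ring
  have split_loss : ∑ x ∈ A, ∑ y ∈ A, h x * (Δp x y + Δm x y) * μ x * μ y =
      ∑ x ∈ A, ∑ y ∈ A, h x * Δp x y * μ x * μ y
        + ∑ x ∈ A, ∑ y ∈ A, h x * Δm x y * μ x * μ y := by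
    simp only [mul_add, add_mul, Finset.sum_add_distrib]
  rw [split_kernel, split_loss, sum_sum_add_mul_of_symm hΔm]
  field_simp
  ring

theorem sum_mul_of_marginal [CommSemiring R] {r : E → E → E → R} {K : E → E → R} {μ ν ξ : E → R}
    (hr : ∀ y ∈ A, ν y ≠ 0 → ∀ z ∈ A, ∑ x ∈ A, r x y z * μ x = K y z) (F : E → E → R) :
    ∑ x ∈ A, ∑ y ∈ A, ∑ z ∈ A, F y z * r x y z * μ x * ν y * ξ z =
      ∑ y ∈ A, ∑ z ∈ A, F y z * K y z * ν y * ξ z := by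
  rw [Finset.sum_comm]
  refine Finset.sum_congr rfl fun y hy => ?_
  rw [Finset.sum_comm]
  refine Finset.sum_congr rfl fun z hz => ?_
  rcases eq_or_ne (ν y) 0 with hν | hν
  · simp only [hν, mul_zero, zero_mul, Finset.sum_const_zero]
  · simp only [← hr y hy hν z hz, Finset.mul_sum, Finset.sum_mul, mul_assoc]

/-- Here `r x y z` is the part, apportioned to the plus-only particle `x`, of the rate at which the
shared particle `y` and the minus-only particle `z` coagulate in the minus system. -/
theorem sum_cross_coagulation [Add E] [CommRing R] {K : E → E → R} {r r₀ ρm : E → E → E → R}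
    {μp μo μm : E → R} (hr : ∀ x y z, r₀ x y z + ρm x y z = r x y z)
    (hrK : ∀ y ∈ A, μo y ≠ 0 → ∀ z ∈ A, ∑ x ∈ A, r x y z * μp x = K y z)
    (ρp : E → E → E → R) (h : E → R) :
    ∑ x ∈ A, ∑ y ∈ A, ∑ z ∈ A, (h (y + z) - h z) * (r₀ x y z + ρm x y z) * μp x * μo y * μm z
        + ∑ x ∈ A, ∑ y ∈ A, ∑ z ∈ A, h y * ρp x y z * μp x * μo y * μm z
        - ∑ x ∈ A, ∑ y ∈ A, ∑ z ∈ A,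
            h y * (r₀ x y z + ρp x y z + ρm x y z) * μp x * μo y * μm z
      = coagulationForm A h K μo μm := by
  rw [coagulationForm, ← sum_mul_of_marginal hrK]
  simp only [← hr, ← Finset.sum_add_distrib, ← Finset.sum_sub_distrib]
  exact Finset.sum_congr rfl fun x _ => Finset.sum_congr rfl fun y _ =>
    Finset.sum_congr rfl fun z _ => by ring

end Coagulation

/-- In the notation of the coupled system, `K, K₀, Δm, Δp` are `K⁻, K_S⁰, Δ_S⁻, Δ_S⁺` and
`r, r₀, ρm, ρp` are `r⁻, K_D⁰, Δ_D⁻, Δ_D⁺`. -/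
theorem coupled_limit_minus_marginal_smoluchowski_general {E R : Type*} [AddCommMagma E] [Field R]
    [NeZero (2 : R)] {S : Set E} {μp μo μm : E → R} (hμp : (Function.support μp).Finite)
    (hμo : (Function.support μo).Finite) (hμm : (Function.support μm).Finite)
    {K K₀ Δm : E → E → R} (hK_symm : ∀ x y, K x y = K y x) (hΔm_symm : ∀ x y, Δm x y = Δm y x)
    (hK : ∀ x y, K₀ x y + Δm x y = K x y) (Δp : E → E → R)
    {r r₀ ρm : E → E → E → R} (hr : ∀ x y z, r₀ x y z + ρm x y z = r x y z)
    (hrK : ∀ y ∈ S, μo y ≠ 0 → ∀ z ∈ S, ∑ᶠ x ∈ S, r x y z * μp x = K y z)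
    (ρp : E → E → E → R) (h : E → R) :
    (1 / 2 * ∑ᶠ x ∈ S, ∑ᶠ y ∈ S, (h (x + y) - h x - h y) * K₀ x y * μo x * μo y
        - (∑ᶠ x ∈ S, ∑ᶠ y ∈ S, h x * (Δp x y + Δm x y) * μo x * μo y)
        - (∑ᶠ x ∈ S, ∑ᶠ y ∈ S, ∑ᶠ z ∈ S,
            h y * (r₀ x y z + ρp x y z + ρm x y z) * μp x * μo y * μm z))
      + (1 / 2 * ∑ᶠ x ∈ S, ∑ᶠ y ∈ S, h (x + y) * Δm x y * μo x * μo y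
        + (∑ᶠ x ∈ S, ∑ᶠ y ∈ S, h x * Δp x y * μo x * μo y)
        + (∑ᶠ x ∈ S, ∑ᶠ y ∈ S, ∑ᶠ z ∈ S,
            (h (y + z) - h z) * (r₀ x y z + ρm x y z) * μp x * μo y * μm z)
        + (∑ᶠ x ∈ S, ∑ᶠ y ∈ S, ∑ᶠ z ∈ S, h y * ρp x y z * μp x * μo y * μm z)
        + 1 / 2 * ∑ᶠ y ∈ S, ∑ᶠ z ∈ S, (h (y + z) - h y - h z) * K y z * μm y * μm z)
      = 1 / 2 * ∑ᶠ x ∈ S, ∑ᶠ y ∈ S,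
          (h (x + y) - h x - h y) * K x y * (μo x + μm x) * (μo y + μm y) := by
  obtain ⟨A, hA⟩ := ((hμp.union (hμo.union hμm)).inter_of_right S).exists_finset_coe
  simp only [Set.inter_union_distrib_left] at hA
  have hAS : ↑A ⊆ S := by simp [hA]
  have hp : S ∩ Function.support μp ⊆ A := by simp [hA]
  have ho : S ∩ Function.support μo ⊆ A := by rw [hA]; grind
  have hm : S ∩ Function.support μm ⊆ A := by rw [hA]; grind
  have hom : S ∩ Function.support (fun x => μo x + μm x) ⊆ A :=
    (Set.inter_subset_inter_right S (Function.support_add μo μm)).trans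
      (Set.inter_union_distrib_left S _ _ ▸ Set.union_subset ho hm)
  have hrA : ∀ y ∈ A, μo y ≠ 0 → ∀ z ∈ A, ∑ x ∈ A, r x y z * μp x = K y z := fun y hy hy0 z hz =>
    finsum_mem_mul_eq_sum hAS hp (r · y z) ▸ hrK y (hAS hy) hy0 z (hAS hz)
  simp only [finsum_mem₃_mul_eq_sum hAS hp ho hm, finsum_mem₂_mul_eq_sum hAS ho ho,
    finsum_mem₂_mul_eq_sum hAS hm hm, finsum_mem₂_mul_eq_sum hAS hom hom]
  have shared := sum_shared_coagulation (A := A) hK hΔm_symm Δp h μo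
  have cross := sum_cross_coagulation (μm := μm) hr hrA ρp h
  have polarization := half_coagulationForm_add_self (A := A) (h := h) hK_symm μo μm
  unfold coagulationForm at shared cross polarization
  linear_combination shared + cross - polarization

/-- The sum of the right-hand sides of the coupled limit equations for `μ⊙` and `μ⊖`
equals the right-hand side of Smoluchowski's equation with kernel `K⁻` evaluated at the
marginal `μ⁻ = μ⊙ + μ⊖`.  Consequently, if `(μ_t^⊕, μ_t^⊙, μ_t^⊖)` solves the coupled
limit system, then `μ_t^− = μ_t^⊙ + μ_t^⊖` satisfies Smoluchowski's coagulation equation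
with kernel `K⁻`. -/
theorem coupled_limit_minus_marginal_smoluchowski
    (Kp Km Khat : ℕ → ℕ → ℝ)
    (hKp : ∀ x y, 0 ≤ Kp x y) (hKm : ∀ x y, 0 ≤ Km x y)
    (hKpSymm : ∀ x y, Kp x y = Kp y x) (hKmSymm : ∀ x y, Km x y = Km y x)
    (hKhat : ∀ x y, 0 ≤ Khat x y) (hKhatSymm : ∀ x y, Khat x y = Khat y x)
    (hMaj : ∀ x y, max (Kp x y) (Km x y) ≤ Khat x y)
    (μp μo μm : ℕ → ℝ)
    (hμp : ∀ x, 0 ≤ μp x) (hμo : ∀ x, 0 ≤ μo x) (hμm : ∀ x, 0 ≤ μm x)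
    (hμpFin : (Function.support μp).Finite) (hμoFin : (Function.support μo).Finite)
    (hμmFin : (Function.support μm).Finite) :
    let S : Set ℕ := {n : ℕ | 1 ≤ n}
    let KS0 : ℕ → ℕ → ℝ := fun x y => min (Kp x y) (Km x y)
    let ΔSp : ℕ → ℕ → ℝ := fun x y => max (Kp x y - Km x y) 0
    let ΔSm : ℕ → ℕ → ℝ := fun x y => max (Km x y - Kp x y) 0
    let Tp : ℕ → ℝ := fun y => ∑ᶠ x ∈ S, Khat x y * μp x
    let Tm : ℕ → ℝ := fun y => ∑ᶠ z ∈ S, Khat y z * μm z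
    let rm : ℕ → ℕ → ℕ → ℝ := fun x y z => Khat x y * Km y z / Tp y
    let rp : ℕ → ℕ → ℕ → ℝ := fun x y z => Khat y z * Kp x y / Tm y
    let KD0 : ℕ → ℕ → ℕ → ℝ := fun x y z => min (rm x y z) (rp x y z)
    let ΔDp : ℕ → ℕ → ℕ → ℝ := fun x y z => max (rp x y z - rm x y z) 0
    let ΔDm : ℕ → ℕ → ℕ → ℝ := fun x y z => max (rm x y z - rp x y z) 0
    (∀ y ∈ Function.support μo, 0 < Tp y ∧ 0 < Tm y) →
    ∀ h : ℕ → ℝ,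
      (((1 : ℝ) / 2) * ∑ᶠ x ∈ S, ∑ᶠ y ∈ S,
            (h (x + y) - h x - h y) * KS0 x y * μo x * μo y
        - (∑ᶠ x ∈ S, ∑ᶠ y ∈ S, h x * (ΔSp x y + ΔSm x y) * μo x * μo y)
        - (∑ᶠ x ∈ S, ∑ᶠ y ∈ S, ∑ᶠ z ∈ S,
            h y * (KD0 x y z + ΔDp x y z + ΔDm x y z) * μp x * μo y * μm z))
      +
      (((1 : ℝ) / 2) * ∑ᶠ x ∈ S, ∑ᶠ y ∈ S, h (x + y) * ΔSm x y * μo x * μo y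
        + (∑ᶠ x ∈ S, ∑ᶠ y ∈ S, h x * ΔSp x y * μo x * μo y)
        + (∑ᶠ x ∈ S, ∑ᶠ y ∈ S, ∑ᶠ z ∈ S,
            (h (y + z) - h z) * (KD0 x y z + ΔDm x y z) * μp x * μo y * μm z)
        + (∑ᶠ x ∈ S, ∑ᶠ y ∈ S, ∑ᶠ z ∈ S,
            h y * ΔDp x y z * μp x * μo y * μm z)
        + ((1 : ℝ) / 2) * ∑ᶠ y ∈ S, ∑ᶠ z ∈ S,
            (h (y + z) - h y - h z) * Km y z * μm y * μm z)
      =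
      ((1 : ℝ) / 2) * ∑ᶠ x ∈ S, ∑ᶠ y ∈ S,
          (h (x + y) - h x - h y) * Km x y * (μo x + μm x) * (μo y + μm y) := by
  intro S KS0 ΔSp ΔSm Tp Tm rm rp _ ΔDp _ hT h
  exact coupled_limit_minus_marginal_smoluchowski_general hμpFin hμoFin hμmFin hKmSymm
    (fun x y => by simp only [ΔSm, hKpSymm x y, hKmSymm x y])
    (fun x y => by simp only [KS0, ΔSm, min_comm (Kp x y), min_add_max_sub_zero]) ΔSp
    (fun x y z => min_add_max_sub_zero (rm x y z) (rp x y z))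
    (fun y _ hy z _ => finsum_mem_mul_div_finsum_mem_mul (hT y hy).1.ne' (Km y z)) ΔDp h
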